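/- Let (X, T) be a dynamical system. The following statements are equivalent: (1) (X, T) is mildly mixing; (2) (K(X), T_K) is mildly mixing; (3) for every λ ∈ (0,1], (𝔽^{=λ}(X), T_F|_{𝔽^{=λ}(X)}) is mildly mixing; (4) there exists λ ∈ (0,1] such that (𝔽^{=λ}(X), T_F|_{𝔽^{=λ}(X)}) is mildly mixing. -/

import Mathlib

open Metric Set TopologicalSpace Filter Function
open scoped Classical

variable {X Y : Type*}

/-- Extended Hausdorff metric on subsets of `X`: the usual Hausdorff distance between
two nonempty sets (or two empty sets), and `diam X` when exactly one of them is empty. -/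
noncomputable def eHd (X : Type*) [MetricSpace X] (A B : Set X) : ℝ :=
  if (A.Nonempty ∧ B.Nonempty) ∨ (A = ∅ ∧ B = ∅) then Metric.hausdorffDist A B
  else Metric.diam (Set.univ : Set X)

/-- The `α`-cut of a fuzzy set. -/
def cut (A : X → ℝ) (α : ℝ) : Set X := {x | α ≤ A x}

/-- The levelwise metric `d_∞` on fuzzy sets. -/
noncomputable def dinf [MetricSpace X] (A B : X → ℝ) : ℝ :=
  sSup {r : ℝ | ∃ α ∈ Set.Ioc (0:ℝ) 1, r = eHd X (cut A α) (cut B α)}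

/-- A fuzzy set: an upper semicontinuous function into `[0,1]`. -/
def IsFuzzy [TopologicalSpace X] (A : X → ℝ) : Prop :=
  (∀ x, A x ∈ Set.Icc (0:ℝ) 1) ∧ UpperSemicontinuous A

/-- `𝔽₀(X)`: nonempty (not identically zero) u.s.c. fuzzy sets. -/
def F0 (X : Type*) [TopologicalSpace X] : Set (X → ℝ) :=
  {A | IsFuzzy A ∧ ∃ x, A x ≠ 0}

/-- `𝔽^{=λ}(X)`: u.s.c. fuzzy sets with maximum value `λ`. -/
def Feq (X : Type*) [TopologicalSpace X] (lam : ℝ) : Set (X → ℝ) :=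
  {A | IsFuzzy A ∧ (∃ x, A x = lam) ∧ ∀ x, A x ≤ lam}

/-- `𝔽^{≥λ}(X)`: u.s.c. fuzzy sets attaining a value `≥ λ`. -/
def Fge (X : Type*) [TopologicalSpace X] (lam : ℝ) : Set (X → ℝ) :=
  {A | IsFuzzy A ∧ ∃ x, lam ≤ A x}

/-- Zadeh's extension of `T`. -/
noncomputable def zadeh (T : X → X) (A : X → ℝ) : X → ℝ :=
  fun x => sSup (A '' (T ⁻¹' {x}))

/-- The induced map `T_K` on the hyperspace of nonempty closed (= compact) subsets. -/
def hyper [TopologicalSpace X] (T : X → X) (hT : Continuous T)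
    (A : NonemptyCompacts X) : NonemptyCompacts X :=
  ⟨⟨T '' A, A.isCompact.image hT⟩, A.nonempty.image T⟩

/-- Topological transitivity. -/
def TopTrans [TopologicalSpace Y] (S : Y → Y) : Prop :=
  ∀ U V : Set Y, IsOpen U → IsOpen V → U.Nonempty → V.Nonempty →
    ∃ n : ℕ, (S^[n] '' U ∩ V).Nonempty

/-- Weak mixing: `S × S` is transitive. -/
def TopWeakMix [TopologicalSpace Y] (S : Y → Y) : Prop :=
  TopTrans (fun p : Y × Y => (S p.1, S p.2))

/-- Topological transitivity of `S` restricted to `C`, for the topology induced by the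
(pseudo)metric `ρ`, phrased via metric balls. -/
def TransOn (ρ : Y → Y → ℝ) (S : Y → Y) (C : Set Y) : Prop :=
  ∀ A ∈ C, ∀ B ∈ C, ∀ ε > 0, ∃ n : ℕ, ∃ E ∈ C, ρ E A < ε ∧ ρ (S^[n] E) B < ε

/-- Weak mixing of `S` restricted to `C`, phrased via metric balls. -/
def WeakMixOn (ρ : Y → Y → ℝ) (S : Y → Y) (C : Set Y) : Prop :=
  ∀ A₁ ∈ C, ∀ A₂ ∈ C, ∀ B₁ ∈ C, ∀ B₂ ∈ C, ∀ ε > 0, ∃ n : ℕ,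
    ∃ E₁ ∈ C, ∃ E₂ ∈ C, ρ E₁ A₁ < ε ∧ ρ E₂ A₂ < ε ∧
      ρ (S^[n] E₁) B₁ < ε ∧ ρ (S^[n] E₂) B₂ < ε


/-- Mild mixing on a topological space: `S` is weakly disjoint with every transitive
dynamical system (a compact metric space with at least two points together with a
continuous surjection). -/
def MildMixTop [TopologicalSpace Y] (S : Y → Y) : Prop :=
  ∀ (Z : Type) [MetricSpace Z] [CompactSpace Z] [Nontrivial Z] (R : Z → Z),
    Continuous R → Function.Surjective R → TopTrans R →
      TopTrans (fun p : Y × Z => (S p.1, R p.2))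

/-- Mild mixing of `S` restricted to `C` (with the metric `ρ`): the product of the
subsystem with every transitive dynamical system is transitive, phrased via balls. -/
def MildMixOn (ρ : Y → Y → ℝ) (S : Y → Y) (C : Set Y) : Prop :=
  ∀ (Z : Type) [MetricSpace Z] [CompactSpace Z] [Nontrivial Z] (R : Z → Z),
    Continuous R → Function.Surjective R → TopTrans R →
      ∀ A ∈ C, ∀ B ∈ C, ∀ z₁ z₂ : Z, ∀ ε > 0, ∃ n : ℕ, ∃ E ∈ C, ∃ w : Z,
        ρ E A < ε ∧ dist w z₁ < ε ∧ ρ (S^[n] E) B < ε ∧ dist (R^[n] w) z₂ < ε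

/-!
Mild mixing is inherited by finite powers: a transitive system `R` makes `T × R` transitive, so
`T × R` may itself be used as a test system for another copy of `T`. The hyperspace and the fuzzy
systems are then limits of factors of these powers. A tuple `x : ι → X` is sent to its range, or,
for fixed heights `v : ι → ℝ`, to the fuzzy set taking at each point the largest height placed
there; both maps are continuous and intertwine the dynamics, and any two members of `K(X)`, or of
`𝔽^{=λ}(X)`, are approximated simultaneously by images of one and the same power of `X`.
Conversely, a closed set or fuzzy set close to a point (of height `λ`) contains a point of `X`
whose orbit follows it.
-/

section Transitivity

variable {Y' Z : Type*} [TopologicalSpace Y] [TopologicalSpace Y'] [TopologicalSpace Z]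
  {S : Y → Y} {S' : Y' → Y'} {R : Z → Z}

theorem TopTrans.of_semiconj {f : Y → Y'} (hS : TopTrans S) (hf : Continuous f)
    (hfs : Surjective f) (hfS : Semiconj f S S') : TopTrans S' := by
  intro U V hU hV hUne hVne
  obtain ⟨n, _, ⟨y, hyU, rfl⟩, hyV⟩ := hS _ _ (hU.preimage hf) (hV.preimage hf)
    (hUne.preimage hfs) (hVne.preimage hfs)
  refine ⟨n, _, mem_image_of_mem _ hyU, ?_⟩
  rwa [← hfS.iterate_right n]

theorem TopTrans.exists_iterate_mem_prod (h : TopTrans (Prod.map S R)) {U V : Set Y}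
    {U' V' : Set Z} (hU : IsOpen U) (hV : IsOpen V) (hU' : IsOpen U') (hV' : IsOpen V')
    (hUne : U.Nonempty) (hVne : V.Nonempty) (hU'ne : U'.Nonempty) (hV'ne : V'.Nonempty) :
    ∃ n : ℕ, ∃ y ∈ U, ∃ z ∈ U', S^[n] y ∈ V ∧ R^[n] z ∈ V' := by
  obtain ⟨n, _, ⟨⟨y, z⟩, ⟨hy, hz⟩, rfl⟩, hyz⟩ := h _ _ (hU.prod hU') (hV.prod hV')
    (hUne.prod hU'ne) (hVne.prod hV'ne)
  rw [Prod.map_iterate] at hyz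
  exact ⟨n, y, hy, z, hz, hyz⟩

theorem topTrans_prodMap_of_exists_iterate_mem
    (h : ∀ (U V : Set Y) (U' V' : Set Z), IsOpen U → IsOpen V → IsOpen U' → IsOpen V' →
      U.Nonempty → V.Nonempty → U'.Nonempty → V'.Nonempty →
      ∃ n : ℕ, ∃ y ∈ U, ∃ z ∈ U', S^[n] y ∈ V ∧ R^[n] z ∈ V') :
    TopTrans (Prod.map S R) := by
  rintro P Q hP hQ ⟨⟨a, c⟩, hac⟩ ⟨⟨b, d⟩, hbd⟩
  obtain ⟨U, U', hU, hU', haU, hcU', hUP⟩ := isOpen_prod_iff.1 hP a c hac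
  obtain ⟨V, V', hV, hV', hbV, hdV', hVQ⟩ := isOpen_prod_iff.1 hQ b d hbd
  obtain ⟨n, y, hyU, z, hzU', hyV, hzV'⟩ := h U V U' V' hU hV hU' hV' ⟨a, haU⟩ ⟨b, hbV⟩
    ⟨c, hcU'⟩ ⟨d, hdV'⟩
  refine ⟨n, _, mem_image_of_mem _ (hUP (mk_mem_prod hyU hzU')), ?_⟩
  rw [Prod.map_iterate]
  exact hVQ ⟨hyV, hzV'⟩

-- Disjoint open sets in `Z` exclude the return time `0`.
theorem TopTrans.denseRange_of_prodMap [T2Space Z] [Nontrivial Z] (h : TopTrans (Prod.map S R)) :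
    DenseRange S := by
  obtain ⟨c, d, hcd⟩ := exists_pair_ne Z
  obtain ⟨U', V', hU', hV', hc, hd, hdisj⟩ := t2_separation hcd
  refine dense_iff_inter_open.2 fun V hV hVne ↦ ?_
  obtain ⟨n, y, -, z, hz, hyV, hzV'⟩ := h.exists_iterate_mem_prod isOpen_univ hV hU' hV'
    (hVne.mono (subset_univ V)) hVne ⟨c, hc⟩ ⟨d, hd⟩
  cases n with
  | zero => exact (disjoint_left.1 hdisj hz hzV').elim
  | succ n => exact ⟨S^[n + 1] y, hyV, S^[n] y, (iterate_succ_apply' S n y).symm⟩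

theorem TopTrans.surjective_of_prodMap [CompactSpace Y] [T2Space Y] [T2Space Z] [Nontrivial Z]
    (h : TopTrans (Prod.map S R)) (hS : Continuous S) : Surjective S := by
  rw [← range_eq_univ, ← (isCompact_range hS).isClosed.closure_eq]
  exact h.denseRange_of_prodMap.closure_eq

end Transitivity

section MildMixing

theorem small_of_separable_metricSpace (Z : Type*) [MetricSpace Z] [SeparableSpace Z] :
    Small.{0} Z :=
  small_of_injective (kuratowskiEmbedding.isometry Z).injective

theorem MildMixTop.topTrans_prodMap [TopologicalSpace Y] {S : Y → Y} (hS : MildMixTop S)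
    {Z : Type*} [MetricSpace Z] [CompactSpace Z] [Nontrivial Z] {R : Z → Z} (hR : Continuous R)
    (hRs : Surjective R) (hRt : TopTrans R) : TopTrans (Prod.map S R) := by
  have : Small.{0} Z := small_of_separable_metricSpace Z
  let e : Z ≃ₜ Shrink.{0} Z := Shrink.homeomorph Z
  have : CompactSpace (Shrink.{0} Z) := e.compactSpace
  have : Nontrivial (Shrink.{0} Z) := e.symm.toEquiv.nontrivial
  have : MetrizableSpace (Shrink.{0} Z) := e.symm.isEmbedding.metrizableSpace
  let _ : MetricSpace (Shrink.{0} Z) := metrizableSpaceMetric _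
  let R' : Shrink.{0} Z → Shrink.{0} Z := e ∘ R ∘ e.symm
  have hR't : TopTrans R' :=
    hRt.of_semiconj e.continuous e.surjective fun z ↦ by simp [R']
  have hSR' : TopTrans (Prod.map S R') := hS _ R' (by fun_prop)
    (e.surjective.comp (hRs.comp e.symm.surjective)) hR't
  exact hSR'.of_semiconj (f := Prod.map id e.symm) (by fun_prop)
    (surjective_id.prodMap e.symm.surjective) fun p ↦ Prod.ext rfl (e.symm_apply_apply _)

theorem MildMixTop.of_semiconj {Y' : Type*} [TopologicalSpace Y] [TopologicalSpace Y']
    {S : Y → Y} {S' : Y' → Y'} {f : Y → Y'} (hS : MildMixTop S) (hf : Continuous f)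
    (hfs : Surjective f) (hfS : Semiconj f S S') : MildMixTop S' :=
  fun Z _ _ _ R hR hRs hRt ↦ (hS Z R hR hRs hRt).of_semiconj (f := Prod.map f id)
    (hf.prodMap continuous_id) (hfs.prodMap surjective_id) fun p ↦ Prod.ext (hfS p.1) rfl

theorem mildMixTop_of_unique [TopologicalSpace Y] [Unique Y] (S : Y → Y) : MildMixTop S :=
  fun _ _ _ _ _ _ _ hRt ↦ hRt.of_semiconj (f := fun z ↦ (default, z)) (by fun_prop)
    (fun p ↦ ⟨p.2, Prod.ext (Subsingleton.elim _ _) rfl⟩)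
    fun _ ↦ Prod.ext (Subsingleton.elim _ _) rfl

variable [MetricSpace X] [CompactSpace X] {T : X → X}

theorem MildMixTop.prodMap [TopologicalSpace Y] {S : Y → Y} (hS : MildMixTop S)
    (hT : Continuous T) (hTm : MildMixTop T) : MildMixTop (Prod.map S T) := by
  intro Z _ _ _ R hR hRs hRt U V hU hV hUne hVne
  have : Nonempty X := ⟨hUne.some.1.2⟩
  have hTR : TopTrans (Prod.map T R) := hTm Z R hR hRs hRt
  have hSTR : TopTrans (Prod.map S (Prod.map T R)) := hS.topTrans_prodMap (hT.prodMap hR)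
    ((hTR.surjective_of_prodMap hT).prodMap hRs) hTR
  exact hSTR.of_semiconj (Homeomorph.prodAssoc Y X Z).symm.continuous
    (Homeomorph.prodAssoc Y X Z).symm.surjective (fun _ ↦ rfl) U V hU hV hUne hVne

theorem MildMixTop.piMap {ι : Type*} [Finite ι] (hTm : MildMixTop T) (hT : Continuous T) :
    MildMixTop (Pi.map fun _ : ι ↦ T) := by
  refine Finite.induction_empty_option (P := fun ι ↦ MildMixTop (Pi.map fun _ : ι ↦ T))
    (fun e h ↦ ?of_equiv) (mildMixTop_of_unique _) (fun h ↦ ?option) ι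
  case of_equiv =>
    exact h.of_semiconj (f := fun x ↦ x ∘ e.symm) (by fun_prop)
      (fun x ↦ ⟨x ∘ e, by simp [comp_assoc]⟩) fun _ ↦ rfl
  case option =>
    refine (h.prodMap hT hTm).of_semiconj (f := fun p o ↦ o.elim p.2 p.1) ?_ ?_ ?_
    · refine continuous_pi fun o ↦ ?_
      cases o with
      | none => exact continuous_snd
      | some i => exact (continuous_apply i).comp continuous_fst
    · exact fun x ↦ ⟨(fun i ↦ x (some i), x none), funext fun o ↦ by cases o <;> rfl⟩
    · exact fun p ↦ funext fun o ↦ by cases o <;> rfl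

end MildMixing

section Hyperspace

universe u

section Topological

variable [TopologicalSpace X] {T : X → X}

theorem coe_hyper_iterate (hT : Continuous T) (n : ℕ) (A : NonemptyCompacts X) :
    ((hyper T hT)^[n] A : Set X) = T^[n] '' A := by
  have hcoe : Semiconj ((↑) : NonemptyCompacts X → Set X) (hyper T hT) (T '' ·) := fun _ ↦ rfl
  rw [hcoe.iterate_right n, image_iterate_eq]

theorem mildMixTop_of_hyper (hT : Continuous T) (h : MildMixTop (hyper T hT)) :
    MildMixTop T := by
  intro Z _ _ _ R hR hRs hRt
  refine topTrans_prodMap_of_exists_iterate_mem ?_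
  intro U V U' V' hU hV hU' hV' hUne hVne hU'ne hV'ne
  have hsub : ∀ W : Set X, W.Nonempty → {K : NonemptyCompacts X | ↑K ⊆ W}.Nonempty :=
    fun W ⟨x, hx⟩ ↦ ⟨{x}, by simpa using hx⟩
  have hTR : TopTrans (Prod.map (hyper T hT) R) := h Z R hR hRs hRt
  obtain ⟨n, K, hKU, z, hz, hKV, hzV⟩ := hTR.exists_iterate_mem_prod
    (NonemptyCompacts.isOpen_subsets_of_isOpen hU) (NonemptyCompacts.isOpen_subsets_of_isOpen hV)
    hU' hV' (hsub U hUne) (hsub V hVne) hU'ne hV'ne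
  rw [mem_ofPred_eq, coe_hyper_iterate] at hKV
  obtain ⟨x, hx⟩ := K.nonempty
  exact ⟨n, x, hKU hx, z, hz, hKV (mem_image_of_mem _ hx), hzV⟩

/-- The finite set of entries of a nonempty tuple, as a point of the hyperspace. -/
def tupleRange {ι : Type*} [Finite ι] [Nonempty ι] (x : ι → X) : NonemptyCompacts X :=
  ⟨⟨range x, (finite_range x).isCompact⟩, range_nonempty x⟩

theorem continuous_tupleRange {ι : Type*} [Finite ι] [Nonempty ι] :
    Continuous (tupleRange : (ι → X) → NonemptyCompacts X) :=
  continuous_induced_rng.2 vietoris.continuous_range_of_finite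

theorem semiconj_tupleRange {ι : Type*} [Finite ι] [Nonempty ι] (hT : Continuous T) :
    Semiconj tupleRange (Pi.map fun _ : ι ↦ T) (hyper T hT) :=
  fun x ↦ SetLike.coe_injective (range_comp T x)

theorem exists_tupleRange_mem_and_mem {X : Type u} [TopologicalSpace X]
    {U V : Set (NonemptyCompacts X)} (hU : IsOpen U) (hV : IsOpen V) (hUne : U.Nonempty)
    (hVne : V.Nonempty) :
    ∃ (ι : Type u) (_ : Finite ι) (_ : Nonempty ι) (x y : ι → X),
      tupleRange x ∈ U ∧ tupleRange y ∈ V := by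
  obtain ⟨A, hAU, hA⟩ := NonemptyCompacts.dense_setOfPred_finite.inter_open_nonempty U hU hUne
  obtain ⟨B, hBV, hB⟩ := NonemptyCompacts.dense_setOfPred_finite.inter_open_nonempty V hV hVne
  have := hA.to_subtype
  have := hB.to_subtype
  have := A.nonempty.to_subtype
  have := B.nonempty.to_subtype
  refine ⟨A × B, inferInstance, inferInstance, (↑) ∘ Prod.fst, (↑) ∘ Prod.snd, ?_, ?_⟩
  · convert hAU
    exact SetLike.coe_injective ((Prod.fst_surjective.range_comp _).trans Subtype.range_coe)
  · convert hBV
    exact SetLike.coe_injective ((Prod.snd_surjective.range_comp _).trans Subtype.range_coe)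

end Topological

variable [MetricSpace X] [CompactSpace X] {T : X → X}

theorem MildMixTop.hyper (hTm : MildMixTop T) (hT : Continuous T) :
    MildMixTop (hyper T hT) := by
  intro Z _ _ _ R hR hRs hRt
  refine topTrans_prodMap_of_exists_iterate_mem ?_
  intro U V U' V' hU hV hU' hV' hUne hVne hU'ne hV'ne
  obtain ⟨ι, _, _, a, b, ha, hb⟩ := exists_tupleRange_mem_and_mem hU hV hUne hVne
  have hpow : TopTrans (Prod.map (Pi.map fun _ : ι ↦ T) R) := hTm.piMap hT Z R hR hRs hRt
  obtain ⟨n, x, hxU, z, hz, hxV, hzV⟩ := hpow.exists_iterate_mem_prod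
    (hU.preimage continuous_tupleRange) (hV.preimage continuous_tupleRange) hU' hV'
    ⟨a, ha⟩ ⟨b, hb⟩ hU'ne hV'ne
  refine ⟨n, tupleRange x, hxU, z, hz, ?_, hzV⟩
  rwa [← (semiconj_tupleRange hT).iterate_right n]

end Hyperspace

section FuzzyPush

variable {ι : Type*} {f : ι → X} {v : ι → ℝ}

/-- Zadeh's extension along an arbitrary map `f : ι → X`, so that `zadeh T = fuzzyPush T`. For a
tuple `f` it is the fuzzy set placing a point of height `v i` at each `f i`. Points outside the
range of `f` get the value `sSup ∅ = 0`. -/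
noncomputable def fuzzyPush (f : ι → X) (v : ι → ℝ) : X → ℝ :=
  fun x ↦ sSup (v '' (f ⁻¹' {x}))

theorem fuzzyPush_nonneg (hv : ∀ i, 0 ≤ v i) (x : X) : 0 ≤ fuzzyPush f v x :=
  Real.sSup_nonneg (forall_mem_image.2 fun i _ ↦ hv i)

theorem fuzzyPush_le {c : ℝ} (hc : 0 ≤ c) (hv : ∀ i, v i ≤ c) (x : X) : fuzzyPush f v x ≤ c :=
  Real.sSup_le (forall_mem_image.2 fun i _ ↦ hv i) hc

theorem le_fuzzyPush_apply (hv : BddAbove (range v)) (i : ι) : v i ≤ fuzzyPush f v (f i) :=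
  le_csSup (hv.mono (image_subset_range _ _)) ⟨i, rfl, rfl⟩

theorem fuzzyPush_mem_insert_image (hv : (range v).Finite) (x : X) :
    fuzzyPush f v x ∈ insert 0 (v '' (f ⁻¹' {x})) := by
  rcases (v '' (f ⁻¹' {x})).eq_empty_or_nonempty with hx | hx
  · exact Or.inl (by rw [fuzzyPush, hx, Real.sSup_empty])
  · exact Or.inr (hx.csSup_mem (hv.subset (image_subset_range _ _)))

theorem finite_range_fuzzyPush (hv : (range v).Finite) : (range (fuzzyPush f v)).Finite :=
  (hv.insert 0).subset <| range_subset_iff.2 fun x ↦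
    insert_subset_insert (image_subset_range _ _) (fuzzyPush_mem_insert_image hv x)

theorem cut_fuzzyPush (hv : (range v).Finite) {α : ℝ} (hα : 0 < α) :
    cut (fuzzyPush f v) α = f '' cut v α := by
  ext x
  constructor
  · intro (hx : α ≤ fuzzyPush f v x)
    rcases fuzzyPush_mem_insert_image (f := f) hv x with h0 | ⟨i, hi, hvi⟩
    · exact absurd (h0 ▸ hx) hα.not_ge
    · exact ⟨i, hx.trans_eq hvi.symm, hi⟩
  · rintro ⟨i, hi, rfl⟩
    exact le_trans hi (le_fuzzyPush_apply hv.bddAbove i)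

theorem eq_of_forall_pos_cut_eq {A B : X → ℝ} (hA : ∀ x, 0 ≤ A x) (hB : ∀ x, 0 ≤ B x)
    (h : ∀ α > 0, cut A α = cut B α) : A = B := by
  have hle : ∀ {A B : X → ℝ}, (∀ x, 0 ≤ B x) → (∀ α > 0, cut A α ⊆ cut B α) → A ≤ B := by
    intro A B hB h x
    rcases le_or_gt (A x) 0 with hx | hx
    · exact hx.trans (hB x)
    · exact h (A x) hx (le_refl (A x))
  exact le_antisymm (hle hB fun α hα ↦ (h α hα).subset) (hle hA fun α hα ↦ (h α hα).superset)

theorem semiconj_fuzzyPush_zadeh [Finite ι] (hv : ∀ i, 0 ≤ v i) (T : X → X) :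
    Semiconj (fuzzyPush · v) (Pi.map fun _ ↦ T) (zadeh T) := by
  intro x
  have hnonneg : ∀ y, 0 ≤ fuzzyPush x v y := fuzzyPush_nonneg hv
  refine eq_of_forall_pos_cut_eq (fuzzyPush_nonneg hv)
    (fuzzyPush_nonneg (f := T) hnonneg) fun α hα ↦ ?_
  have hrange : (range v).Finite := finite_range v
  calc cut (fuzzyPush (T ∘ x) v) α = T '' (x '' cut v α) := by
        rw [cut_fuzzyPush hrange hα, image_comp]
    _ = T '' cut (fuzzyPush x v) α := by rw [cut_fuzzyPush hrange hα]
    _ = cut (fuzzyPush T (fuzzyPush x v)) α :=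
        (cut_fuzzyPush (finite_range_fuzzyPush hrange) hα).symm

theorem le_zadeh_iterate_apply {T : X → X} {c : ℝ} (hc : 0 ≤ c) (n : ℕ) {E : X → ℝ}
    (hE : ∀ x, E x ≤ c) (x : X) : E x ≤ (zadeh T)^[n] E (T^[n] x) := by
  induction n generalizing E x with
  | zero => exact le_rfl
  | succ n ih =>
    calc E x ≤ zadeh T E (T x) := le_fuzzyPush_apply ⟨c, forall_mem_range.2 hE⟩ x
      _ ≤ (zadeh T)^[n] (zadeh T E) (T^[n] (T x)) := ih (fuzzyPush_le hc hE) (T x)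

theorem fuzzyPush_mem_Feq [TopologicalSpace X] [T1Space X] [Finite ι] {lam : ℝ}
    (hlam : lam ∈ Ioc (0 : ℝ) 1) (hv : ∀ i, v i ∈ Icc 0 lam) (hmax : ∃ i, v i = lam) :
    fuzzyPush f v ∈ Feq X lam := by
  have hnonneg : ∀ x, 0 ≤ fuzzyPush f v x := fuzzyPush_nonneg fun i ↦ (hv i).1
  have hle : ∀ x, fuzzyPush f v x ≤ lam := fuzzyPush_le hlam.1.le fun i ↦ (hv i).2
  refine ⟨⟨fun x ↦ ⟨hnonneg x, (hle x).trans hlam.2⟩, ?_⟩, ?_, hle⟩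
  · refine upperSemicontinuous_iff_isClosed_preimage.2 fun α ↦ ?_
    change IsClosed (cut (fuzzyPush f v) α)
    rcases le_or_gt α 0 with hα | hα
    · have : cut (fuzzyPush f v) α = univ := eq_univ_of_forall fun x ↦ hα.trans (hnonneg x)
      exact this ▸ isClosed_univ
    · rw [cut_fuzzyPush (finite_range v) hα]
      exact (toFinite _).isClosed
  · obtain ⟨i, hi⟩ := hmax
    exact ⟨f i, le_antisymm (hle _) (hi ▸ le_fuzzyPush_apply (finite_range v).bddAbove i)⟩

end FuzzyPush

section LevelwiseMetric

variable [MetricSpace X]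

theorem eHd_of_nonempty {A B : Set X} (hA : A.Nonempty) (hB : B.Nonempty) :
    eHd X A B = hausdorffDist A B :=
  if_pos (Or.inl ⟨hA, hB⟩)

theorem eHd_le_of_subset_thickening {A B : Set X} {r : ℝ} (hr : 0 ≤ r) (hAB : A ⊆ thickening r B)
    (hBA : B ⊆ thickening r A) : eHd X A B ≤ r := by
  rcases A.eq_empty_or_nonempty with rfl | hA
  · obtain rfl : B = ∅ := subset_empty_iff.1 (by simpa using hBA)
    simpa [eHd] using hr
  obtain ⟨b, hb, -⟩ := mem_thickening_iff.1 (hAB hA.some_mem)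
  rw [eHd_of_nonempty hA ⟨b, hb⟩]
  refine hausdorffDist_le_of_mem_dist hr (fun x hx ↦ ?_) fun y hy ↦ ?_
  · exact (mem_thickening_iff.1 (hAB hx)).imp fun _ h ↦ h.imp_right le_of_lt
  · exact (mem_thickening_iff.1 (hBA hy)).imp fun _ h ↦ h.imp_right le_of_lt

theorem eHd_le_diam [BoundedSpace X] (A B : Set X) : eHd X A B ≤ diam (univ : Set X) := by
  unfold eHd
  split_ifs with h
  · rcases h with ⟨hA, hB⟩ | ⟨rfl, rfl⟩
    · exact (hausdorffDist_le_diam hA (.all A) hB (.all B)).trans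
        (diam_mono (subset_univ _) (.all univ))
    · exact hausdorffDist_self_zero.trans_le diam_nonneg
  · exact le_rfl

theorem eHd_cut_le_dinf [BoundedSpace X] (A B : X → ℝ) {α : ℝ} (hα : α ∈ Ioc (0 : ℝ) 1) :
    eHd X (cut A α) (cut B α) ≤ dinf A B := by
  refine le_csSup ⟨diam (univ : Set X), ?_⟩ ⟨α, hα, rfl⟩
  rintro _ ⟨β, -, rfl⟩
  exact eHd_le_diam _ _

theorem cut_subset_thickening_of_dinf_lt [BoundedSpace X] {A B : X → ℝ} {α r : ℝ}
    (hα : α ∈ Ioc (0 : ℝ) 1) (hB : (cut B α).Nonempty) (h : dinf A B < r) :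
    cut A α ⊆ thickening r (cut B α) := by
  intro x hx
  have hlt : hausdorffDist (cut A α) (cut B α) < r :=
    eHd_of_nonempty ⟨x, hx⟩ hB ▸ (eHd_cut_le_dinf A B hα).trans_lt h
  exact mem_thickening_iff.2 (exists_dist_lt_of_hausdorffDist_lt hx hlt
    (hausdorffEDist_ne_top_of_nonempty_of_bounded ⟨x, hx⟩ hB (.all _) (.all _)))

theorem dist_lt_of_dinf_fuzzyPush_const_lt [BoundedSpace X] {lam : ℝ}
    (hlam : lam ∈ Ioc (0 : ℝ) 1) {E : X → ℝ} {u x : X} {ε : ℝ}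
    (h : dinf E (fuzzyPush (fun _ : Unit ↦ u) fun _ ↦ lam) < ε) (hx : lam ≤ E x) :
    dist x u < ε := by
  have hcut : cut (fuzzyPush (fun _ : Unit ↦ u) fun _ ↦ lam) lam = {u} := by
    rw [cut_fuzzyPush (finite_range _) hlam.1]
    simp [cut]
  have hxu := cut_subset_thickening_of_dinf_lt hlam (hcut ▸ singleton_nonempty u) h hx
  rwa [hcut, thickening_singleton] at hxu

/-- Every cut of `A` at positive height lies in the `r`-thickening of the corresponding cut of `B`:
one of the two inclusions that bound `dinf A B` by `r`. -/
def CutsWithin (r : ℝ) (A B : X → ℝ) : Prop :=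
  ∀ α > 0, cut A α ⊆ thickening r (cut B α)

theorem CutsWithin.trans {r s : ℝ} {A B C : X → ℝ} (hAB : CutsWithin r A B)
    (hBC : CutsWithin s B C) : CutsWithin (r + s) A C :=
  fun α hα ↦ (hAB α hα).trans <|
    (thickening_subset_of_subset r (hBC α hα)).trans (thickening_thickening_subset r s _)

theorem dinf_le_of_cutsWithin {r : ℝ} {A B : X → ℝ} (hr : 0 ≤ r) (hAB : CutsWithin r A B)
    (hBA : CutsWithin r B A) : dinf A B ≤ r := by
  refine csSup_le ⟨_, 1, by simp, rfl⟩ ?_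
  rintro _ ⟨α, hα, rfl⟩
  exact eHd_le_of_subset_thickening hr (hAB α hα.1) (hBA α hα.1)

section Tuples

variable {ι : Type*} [Finite ι] {x y : ι → X} {v : ι → ℝ} {A : X → ℝ} {r s : ℝ}

theorem cutsWithin_fuzzyPush_left (h : ∀ i, ∃ a, v i ≤ A a ∧ dist (x i) a < r) :
    CutsWithin r (fuzzyPush x v) A := by
  intro α hα
  rw [cut_fuzzyPush (finite_range v) hα, image_subset_iff]
  intro i hi
  obtain ⟨a, hia, ha⟩ := h i
  exact mem_thickening_iff.2 ⟨a, le_trans hi hia, ha⟩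

theorem cutsWithin_fuzzyPush_right (h : ∀ a, ∃ i, A a ≤ v i ∧ dist a (x i) < r) :
    CutsWithin r A (fuzzyPush x v) := by
  intro α hα a ha
  obtain ⟨i, hai, hi⟩ := h a
  rw [cut_fuzzyPush (finite_range v) hα]
  exact mem_thickening_iff.2 ⟨x i, mem_image_of_mem x (le_trans ha hai), hi⟩

theorem cutsWithin_fuzzyPush_of_dist_lt (h : ∀ i, dist (x i) (y i) < r) :
    CutsWithin r (fuzzyPush x v) (fuzzyPush y v) :=
  cutsWithin_fuzzyPush_left fun i ↦
    ⟨y i, le_fuzzyPush_apply (finite_range v).bddAbove i, h i⟩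

theorem dinf_fuzzyPush_le (hr : 0 ≤ r) (hs : 0 ≤ s) (hxy : ∀ i, dist (x i) (y i) < r)
    (hyA : CutsWithin s (fuzzyPush y v) A) (hAy : CutsWithin s A (fuzzyPush y v)) :
    dinf (fuzzyPush x v) A ≤ r + s := by
  refine dinf_le_of_cutsWithin (add_nonneg hr hs)
    ((cutsWithin_fuzzyPush_of_dist_lt hxy).trans hyA) ?_
  rw [add_comm]
  exact hAy.trans (cutsWithin_fuzzyPush_of_dist_lt fun i ↦ dist_comm (x i) (y i) ▸ hxy i)

end Tuples

end LevelwiseMetric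

section FuzzySystems

universe u

theorem exists_finite_forall_exists_le_and_dist_lt [PseudoMetricSpace X] [CompactSpace X]
    {A : X → ℝ} (hA : UpperSemicontinuous A) {r : ℝ} (hr : 0 < r) :
    ∃ s : Set X, s.Finite ∧ ∀ a, ∃ p ∈ s, A a ≤ A p ∧ dist a p < r := by
  obtain ⟨t, -, ht, hcover⟩ := finite_cover_balls_of_compact (isCompact_univ (X := X)) (half_pos hr)
  have hmax (q : X) : ∃ p ∈ closedBall q (r / 2), IsMaxOn A (closedBall q (r / 2)) p :=
    (hA.upperSemicontinuousOn _).exists_isMaxOn (nonempty_closedBall.2 (half_pos hr).le)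
      isClosed_closedBall.isCompact
  choose m hm hmA using hmax
  refine ⟨m '' t, ht.image m, fun a ↦ ?_⟩
  obtain ⟨q, hq, haq⟩ := mem_iUnion₂.1 (hcover (mem_univ a))
  refine ⟨m q, mem_image_of_mem m hq, hmA q (ball_subset_closedBall haq), ?_⟩
  calc dist a (m q) ≤ dist a q + dist (m q) q := dist_triangle_right _ _ _
    _ < r / 2 + r / 2 := add_lt_add_of_lt_of_le haq (hm q)
    _ = r := add_halves r

-- The heights `min (A p) (B q)` on `s × t` serve both fuzzy sets, since each of `A` and `B` attains
-- the common maximum `lam` on its own finite set.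
theorem exists_common_fuzzyPush_cutsWithin {X : Type u} [MetricSpace X] [CompactSpace X]
    {lam r : ℝ} {A B : X → ℝ} (hA : A ∈ Feq X lam) (hB : B ∈ Feq X lam) (hr : 0 < r) :
    ∃ (ι : Type u) (_ : Finite ι) (x y : ι → X) (v : ι → ℝ),
      (∀ i, v i ∈ Icc 0 lam) ∧ (∃ i, v i = lam) ∧
      (CutsWithin r (fuzzyPush x v) A ∧ CutsWithin r A (fuzzyPush x v)) ∧
      CutsWithin r (fuzzyPush y v) B ∧ CutsWithin r B (fuzzyPush y v) := by
  obtain ⟨s, hs, hsA⟩ := exists_finite_forall_exists_le_and_dist_lt hA.1.2 hr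
  obtain ⟨t, ht, htB⟩ := exists_finite_forall_exists_le_and_dist_lt hB.1.2 hr
  have := hs.to_subtype
  have := ht.to_subtype
  obtain ⟨p₀, hp₀⟩ : ∃ p : s, A p = lam := by
    obtain ⟨a, ha⟩ := hA.2.1
    obtain ⟨p, hp, hap, -⟩ := hsA a
    exact ⟨⟨p, hp⟩, (hA.2.2 p).antisymm (ha ▸ hap)⟩
  obtain ⟨q₀, hq₀⟩ : ∃ q : t, B q = lam := by
    obtain ⟨b, hb⟩ := hB.2.1
    obtain ⟨q, hq, hbq, -⟩ := htB b
    exact ⟨⟨q, hq⟩, (hB.2.2 q).antisymm (hb ▸ hbq)⟩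
  refine ⟨s × t, inferInstance, fun i ↦ i.1, fun i ↦ i.2, fun i ↦ min (A i.1) (B i.2),
    fun i ↦ ⟨le_min (hA.1.1 _).1 (hB.1.1 _).1, min_le_of_left_le (hA.2.2 _)⟩,
    ⟨(p₀, q₀), by simp only [hp₀, hq₀, min_self]⟩, ⟨?_, ?_⟩, ?_, ?_⟩
  · exact cutsWithin_fuzzyPush_left fun i ↦ ⟨i.1, min_le_left _ _, by rwa [dist_self]⟩
  · refine cutsWithin_fuzzyPush_right fun a ↦ ?_
    obtain ⟨p, hp, hap, hdist⟩ := hsA a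
    exact ⟨(⟨p, hp⟩, q₀), le_min hap (hq₀ ▸ hA.2.2 a), hdist⟩
  · exact cutsWithin_fuzzyPush_left fun i ↦ ⟨i.2, min_le_right _ _, by rwa [dist_self]⟩
  · refine cutsWithin_fuzzyPush_right fun b ↦ ?_
    obtain ⟨q, hq, hbq, hdist⟩ := htB b
    exact ⟨(p₀, ⟨q, hq⟩), le_min (hp₀ ▸ hB.2.2 b) hbq, hdist⟩

variable [MetricSpace X] {T : X → X} {lam : ℝ}

theorem MildMixTop.mildMixOn_zadeh [CompactSpace X] (hTm : MildMixTop T) (hT : Continuous T)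
    (hlam : lam ∈ Ioc (0 : ℝ) 1) : MildMixOn dinf (zadeh T) (Feq X lam) := by
  intro Z _ _ _ R hR hRs hRt A hA B hB z₁ z₂ ε hε
  have hδ : 0 < ε / 3 := by positivity
  have hδε : ε / 3 + ε / 3 < ε := by linarith
  obtain ⟨ι, _, a, b, v, hv, hmax, ⟨haA, hAa⟩, hbB, hBb⟩ :=
    exists_common_fuzzyPush_cutsWithin hA hB hδ
  have := Fintype.ofFinite ι
  have hpow : TopTrans (Prod.map (Pi.map fun _ : ι ↦ T) R) := hTm.piMap hT Z R hR hRs hRt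
  obtain ⟨n, x, hxa, w, hw, hxb, hRw⟩ := hpow.exists_iterate_mem_prod
    (U := ball a (ε / 3)) (V := ball b (ε / 3)) (U' := ball z₁ ε) (V' := ball z₂ ε)
    isOpen_ball isOpen_ball isOpen_ball isOpen_ball (nonempty_ball.2 hδ) (nonempty_ball.2 hδ)
    (nonempty_ball.2 hε) (nonempty_ball.2 hε)
  have hdist {y c : ι → X} (hy : y ∈ ball c (ε / 3)) (i : ι) : dist (y i) (c i) < ε / 3 :=
    (dist_le_pi_dist y c i).trans_lt hy
  refine ⟨n, fuzzyPush x v, fuzzyPush_mem_Feq hlam hv hmax, w, ?_, hw, ?_, hRw⟩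
  · exact (dinf_fuzzyPush_le hδ.le hδ.le (hdist hxa) haA hAa).trans_lt hδε
  · rw [← (semiconj_fuzzyPush_zadeh (fun i ↦ (hv i).1) T).iterate_right n]
    exact (dinf_fuzzyPush_le hδ.le hδ.le (hdist hxb) hbB hBb).trans_lt hδε

theorem mildMixTop_of_mildMixOn_zadeh [BoundedSpace X] (hlam : lam ∈ Ioc (0 : ℝ) 1)
    (h : MildMixOn dinf (zadeh T) (Feq X lam)) : MildMixTop T := by
  intro Z _ _ _ R hR hRs hRt U V hU hV ⟨⟨u, z₁⟩, hu⟩ ⟨⟨v, z₂⟩, hv⟩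
  obtain ⟨ε₁, hε₁, hεU⟩ := Metric.isOpen_iff.1 hU _ hu
  obtain ⟨ε₂, hε₂, hεV⟩ := Metric.isOpen_iff.1 hV _ hv
  have hpoint (a : X) : fuzzyPush (fun _ : Unit ↦ a) (fun _ ↦ lam) ∈ Feq X lam :=
    fuzzyPush_mem_Feq hlam (fun _ ↦ ⟨hlam.1.le, le_rfl⟩) ⟨(), rfl⟩
  obtain ⟨n, E, hE, w, hEu, hw, hEv, hRw⟩ := h Z R hR hRs hRt _ (hpoint u) _ (hpoint v) z₁ z₂
    (min ε₁ ε₂) (lt_min hε₁ hε₂)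
  obtain ⟨x, hx⟩ := hE.2.1
  have hTx : lam ≤ (zadeh T)^[n] E (T^[n] x) :=
    hx.ge.trans (le_zadeh_iterate_apply hlam.1.le n hE.2.2 x)
  have hxu : dist x u < min ε₁ ε₂ := dist_lt_of_dinf_fuzzyPush_const_lt hlam hEu hx.ge
  have hxv : dist (T^[n] x) v < min ε₁ ε₂ := dist_lt_of_dinf_fuzzyPush_const_lt hlam hEv hTx
  refine ⟨n, _, mem_image_of_mem _ (hεU (a := (x, w)) ?_), hεV ?_⟩
  · exact (max_lt hxu hw).trans_le (min_le_left _ _)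
  · change (Prod.map T R)^[n] (x, w) ∈ _
    rw [Prod.map_iterate]
    exact (max_lt hxv hRw).trans_le (min_le_right _ _)

end FuzzySystems

theorem mildMixing_tfae_general {X : Type*} [MetricSpace X] [CompactSpace X]
    (T : X → X) (hT : Continuous T) :
    List.TFAE
      [MildMixTop T,
       MildMixTop (hyper T hT),
       ∀ lam ∈ Set.Ioc (0 : ℝ) 1, MildMixOn dinf (zadeh T) (Feq X lam),
       ∃ lam ∈ Set.Ioc (0 : ℝ) 1, MildMixOn dinf (zadeh T) (Feq X lam)] := by
  tfae_have 1 → 2 := fun h ↦ h.hyper hT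
  tfae_have 2 → 1 := mildMixTop_of_hyper hT
  tfae_have 1 → 3 := fun h _ hlam ↦ h.mildMixOn_zadeh hT hlam
  tfae_have 3 → 4 := fun h ↦ ⟨1, by simp, h 1 (by simp)⟩
  tfae_have 4 → 1 := fun ⟨_, hlam, h⟩ ↦ mildMixTop_of_mildMixOn_zadeh hlam h
  tfae_finish

/-- Mild mixing of `(X,T)`, of `(K(X), T_K)`, and of the Zadeh extension on every
(equivalently, some) `𝔽^{=λ}(X)` are all equivalent. -/
theorem mildMixing_tfae {X : Type*} [MetricSpace X] [CompactSpace X] [Nontrivial X]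
    (T : X → X) (hT : Continuous T) (hTs : Function.Surjective T) :
    List.TFAE
      [MildMixTop T,
       MildMixTop (hyper T hT),
       ∀ lam ∈ Set.Ioc (0:ℝ) 1, MildMixOn dinf (zadeh T) (Feq X lam),
       ∃ lam ∈ Set.Ioc (0:ℝ) 1, MildMixOn dinf (zadeh T) (Feq X lam)] :=
  mildMixing_tfae_general T hT
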